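/- Let Z ∈ L^1 and set g(p) = ES_p(Z) for every p ∈ [0,1]. Then ES^g is never finite on L^1: there exists X ∈ L^1 with ES^g(X) = ∞. Specifically, if Z is bounded from above, any X ∈ L^1 unbounded from above satisfies ES^g(X) = ∞; if Z is unbounded from above, then X = 2Z satisfies ES^g(X) = ∞. -/

import Mathlib

open MeasureTheory Set Filter

variable {Ω : Type*} [MeasurableSpace Ω]

/-- An atomless probability space: every set of positive measure has a subset of
strictly smaller positive measure. -/
def Atomless (μ : Measure Ω) : Prop :=
  ∀ A : Set Ω, MeasurableSet A → 0 < μ A →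
    ∃ B : Set Ω, MeasurableSet B ∧ B ⊆ A ∧ 0 < μ B ∧ μ B < μ A

/-- Value at Risk at level `p`: the left `p`-quantile for `p ∈ (0,1]`, the essential
infimum for `p = 0`.  Values are extended reals. -/
noncomputable def VaR (μ : Measure Ω) (X : Ω → ℝ) (p : ℝ) : EReal :=
  if p = 0 then essInf (fun ω => (X ω : EReal)) μ
  else sInf ((fun x : ℝ => (x : EReal)) '' {x : ℝ | ENNReal.ofReal p ≤ μ {ω | X ω ≤ x}})

/-- Real-valued version of the left `p`-quantile, used as the integrand of ES. -/
noncomputable def VaRr (μ : Measure Ω) (X : Ω → ℝ) (p : ℝ) : ℝ :=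
  sInf {x : ℝ | ENNReal.ofReal p ≤ μ {ω | X ω ≤ x}}

/-- Expected Shortfall at level `p`: `(1/(1-p)) ∫_p^1 VaR_q(X) dq` for `p ∈ [0,1)`,
the essential supremum for `p = 1`. -/
noncomputable def ES (μ : Measure Ω) (X : Ω → ℝ) (p : ℝ) : EReal :=
  if p = 1 then essSup (fun ω => (X ω : EReal)) μ
  else (((1 - p)⁻¹ * ∫ q in Set.Ioo p 1, VaRr μ X q : ℝ) : EReal)

/-- The `g`-adjusted Expected Shortfall, `sup_{p ∈ [0,1]} (ES_p(X) - g(p))`.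
Note that in `EReal` one has `⊤ - ⊤ = ⊥`, matching the convention `∞ - ∞ = -∞`. -/
noncomputable def adjES (μ : Measure Ω) (g : ℝ → EReal) (X : Ω → ℝ) : EReal :=
  ⨆ p ∈ Set.Icc (0:ℝ) 1, (ES μ X p - g p)

/-- The class `𝒢` of risk profiles: increasing functions `[0,1] → (-∞,∞]` that are
not identically `∞`. -/
def IsRiskProfile (g : ℝ → EReal) : Prop :=
  MonotoneOn g (Set.Icc (0:ℝ) 1) ∧ (∀ p ∈ Set.Icc (0:ℝ) 1, g p ≠ ⊥) ∧
    ∃ p ∈ Set.Icc (0:ℝ) 1, g p ≠ ⊤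

/-- Second-order stochastic dominance: `SSD μ X Y` means `X ≥_SSD Y`, i.e. every
risk-averse agent prefers `X` to `Y` (positive values are losses). -/
def SSD (μ : Measure Ω) (X Y : Ω → ℝ) : Prop :=
  ∀ u : ℝ → ℝ, Monotone u → ConcaveOn ℝ Set.univ u →
    ∫ ω, u (-(Y ω)) ∂μ ≤ ∫ ω, u (-(X ω)) ∂μ

/-- The inf-convolution of the functionals `ρ_1, …, ρ_n`. -/
noncomputable def infConv (μ : Measure Ω) {n : ℕ} (ρ : Fin n → ((Ω → ℝ) → EReal))
    (X : Ω → ℝ) : EReal :=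
  ⨅ (Y : Fin n → Ω → ℝ) (_ : (∀ i, Integrable (Y i) μ) ∧ ∀ ω, (∑ i, Y i ω) = X ω),
    ∑ i, ρ i (Y i)

/-- The class `𝒢_VaR`: risk profiles finite on `[0,1)`, left-continuous on `[0,1]`
and right-continuous at `0`. -/
def GVaRProfile (g : ℝ → EReal) : Prop :=
  IsRiskProfile g ∧ (∀ p ∈ Set.Ico (0:ℝ) 1, g p ≠ ⊤) ∧
    (∀ p ∈ Set.Ioc (0:ℝ) 1, Filter.Tendsto g (nhdsWithin p (Set.Ico 0 p)) (nhds (g p))) ∧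
    Filter.Tendsto g (nhdsWithin 0 (Set.Ioc 0 1)) (nhds (g 0))

/-- The class `𝒢_ES`: profiles in `𝒢_VaR` such that `h_g(p) = (1-p)g(p)` is concave
on `(0,1)` and left-continuous at `1` (with `h_g(1) = 0` by the convention `0·∞ = 0`). -/
def GESProfile (g : ℝ → EReal) : Prop :=
  GVaRProfile g ∧ ConcaveOn ℝ (Set.Ioo (0:ℝ) 1) (fun p => (1 - p) * (g p).toReal) ∧
    Filter.Tendsto (fun p => (1 - p) * (g p).toReal) (nhdsWithin 1 (Set.Ico (0:ℝ) 1)) (nhds 0)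


theorem aux_bdd (μ : Measure Ω) [IsProbabilityMeasure μ]
    (Z : Ω → ℝ) (hZ : ∃ c : ℝ, ∀ᵐ ω ∂μ, Z ω ≤ c) (X : Ω → ℝ)
    (hX : ¬ ∃ c : ℝ, ∀ᵐ ω ∂μ, X ω ≤ c) :
    adjES μ (fun p => ES μ Z p) X = ⊤ := by
  obtain ⟨c, hc⟩ := hZ
  have h1 : ES μ X 1 = ⊤ := by
    simp only [ES, if_true]
    rw [EReal.eq_top_iff_forall_lt]
    intro y
    by_contra h
    apply hX
    refine ⟨y, ?_⟩
    have := ae_le_essSup (μ := μ) (f := fun ω => (X ω : EReal))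
    filter_upwards [this] with ω hω
    exact EReal.coe_le_coe_iff.1 (hω.trans (not_lt.1 h))
  have h2 : ES μ Z 1 ≤ c := by
    simp only [ES, if_true]
    refine essSup_le_of_ae_le _ ?_
    filter_upwards [hc] with ω hω
    exact EReal.coe_le_coe_iff.2 hω
  have h3 : ES μ X 1 - ES μ Z 1 = ⊤ := by
    rw [h1]
    exact EReal.top_sub (ne_top_of_le_ne_top (EReal.coe_ne_top c) h2)
  rw [adjES, eq_top_iff, ← h3]
  exact le_iSup₂ (f := fun p (_ : p ∈ Set.Icc (0:ℝ) 1) => ES μ X p - ES μ Z p) 1 (by simp)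

theorem VaRr_le_iff (μ : Measure Ω) [IsProbabilityMeasure μ]
    (Z : Ω → ℝ) (hZ : AEMeasurable Z μ) {q : ℝ} (hq : q ∈ Ioo (0:ℝ) 1) (x : ℝ) :
    VaRr μ Z q ≤ x ↔ ENNReal.ofReal q ≤ μ {ω | Z ω ≤ x} := by
  have : IsProbabilityMeasure (μ.map Z) := Measure.isProbabilityMeasure_map hZ
  set F := ProbabilityTheory.cdf (μ.map Z) with hF
  have key : ∀ y, ENNReal.ofReal q ≤ μ {ω | Z ω ≤ y} ↔ q ≤ F y := by
    intro y
    have : μ {ω | Z ω ≤ y} = ENNReal.ofReal (F y) := by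
      rw [hF, ProbabilityTheory.ofReal_cdf, Measure.map_apply_of_aemeasurable hZ measurableSet_Iic]
      rfl
    rw [this, ENNReal.ofReal_le_ofReal_iff (ProbabilityTheory.cdf_nonneg _ _)]
  simp only [VaRr, key]
  have hne : {x | q ≤ F x}.Nonempty := by
    have := (ProbabilityTheory.tendsto_cdf_atTop (μ.map Z)).eventually (lt_mem_nhds hq.2)
    obtain ⟨y, hy⟩ := this.exists
    exact ⟨y, hy.le⟩
  have hbd : BddBelow {x | q ≤ F x} := by
    have := (ProbabilityTheory.tendsto_cdf_atBot (μ.map Z)).eventually (gt_mem_nhds hq.1)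
    obtain ⟨y, hy⟩ := this.exists
    refine ⟨y, fun z hz => ?_⟩
    by_contra h
    exact absurd (hz.trans (F.mono (not_le.1 h).le)) (not_le.2 hy)
  refine ⟨fun h => ?_, fun h => csInf_le hbd h⟩
  refine le_trans ?_ (F.mono h)
  by_contra hlt
  have hc := (F.right_continuous (sInf {x | q ≤ F x}))
  have hc' := hc.tendsto.mono_left (nhdsWithin_mono _ Ioi_subset_Ici_self)
  have := (hc'.eventually (gt_mem_nhds (not_le.1 hlt))).and self_mem_nhdsWithin
  obtain ⟨y, hy, hy2⟩ := this.exists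
  obtain ⟨z, hz, hzy⟩ := exists_lt_of_csInf_lt hne hy2
  exact absurd (le_trans hz (F.mono hzy.le)) (not_le.2 hy)

theorem VaRr_integrable (μ : Measure Ω) [IsProbabilityMeasure μ]
    (Z : Ω → ℝ) (hZ : Integrable Z μ) :
    IntegrableOn (VaRr μ Z) (Ioo (0:ℝ) 1) := by
  have hm := hZ.aemeasurable
  have : IsProbabilityMeasure (μ.map Z) := Measure.isProbabilityMeasure_map hm
  have hmono : MonotoneOn (VaRr μ Z) (Ioo (0:ℝ) 1) := by
    intro a ha b hb hab
    rw [VaRr_le_iff μ Z hm ha]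
    exact (ENNReal.ofReal_le_ofReal hab).trans ((VaRr_le_iff μ Z hm hb _).1 le_rfl)
  have hvm : AEMeasurable (VaRr μ Z) (volume.restrict (Ioo (0:ℝ) 1)) :=
    aemeasurable_restrict_of_monotoneOn measurableSet_Ioo hmono
  have : IsFiniteMeasure ((volume.restrict (Ioo (0:ℝ) 1)).map (VaRr μ Z)) := by
    infer_instance
  have hmap : (volume.restrict (Ioo (0:ℝ) 1)).map (VaRr μ Z) = μ.map Z := by
    apply Measure.ext_of_Iic
    intro x
    rw [Measure.map_apply_of_aemeasurable hm measurableSet_Iic,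
      Measure.map_apply_of_aemeasurable hvm measurableSet_Iic,
      Measure.restrict_apply' measurableSet_Ioo]
    have hfin : μ (Z ⁻¹' Iic x) ≠ ⊤ := measure_ne_top _ _
    have hle : μ (Z ⁻¹' Iic x) ≤ 1 := prob_le_one
    set t := (μ (Z ⁻¹' Iic x)).toReal with ht
    have htt : μ (Z ⁻¹' Iic x) = ENNReal.ofReal t := (ENNReal.ofReal_toReal hfin).symm
    have ht0 : 0 ≤ t := ENNReal.toReal_nonneg
    have ht1 : t ≤ 1 := by
      rw [ht]; exact ENNReal.toReal_le_of_le_ofReal zero_le_one (by simpa using hle)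
    have hs : VaRr μ Z ⁻¹' Iic x ∩ Ioo 0 1 = Iic t ∩ Ioo 0 1 := by
      ext q
      simp only [mem_inter_iff, mem_preimage, mem_Iic, and_congr_left_iff]
      intro hq
      rw [VaRr_le_iff μ Z hm hq]
      change _ ≤ μ (Z ⁻¹' Iic x) ↔ _
      rw [htt, ENNReal.ofReal_le_ofReal_iff ht0]
    rw [hs, htt]
    apply le_antisymm
    · calc volume (Iic t ∩ Ioo 0 1) ≤ volume (Ioc 0 t) :=
            measure_mono (fun q hq => ⟨hq.2.1, hq.1⟩)
        _ = _ := by simp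
    · calc ENNReal.ofReal t = volume (Ioo 0 t) := by simp
        _ ≤ _ := measure_mono (fun q (hq : q ∈ Ioo 0 t) =>
            (⟨hq.2.le, hq.1, hq.2.trans_le ht1⟩ : q ∈ Iic t ∩ Ioo 0 1))
  have hid : Integrable (id : ℝ → ℝ) (μ.map Z) := by
    rw [integrable_map_measure aestronglyMeasurable_id hm]
    exact hZ
  rw [← hmap, integrable_map_measure aestronglyMeasurable_id hvm] at hid
  exact hid

theorem VaRr_two (μ : Measure Ω) (Z : Ω → ℝ) (q : ℝ) :
    VaRr μ (fun ω => 2 * Z ω) q = 2 * VaRr μ Z q := by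
  simp only [VaRr]
  rw [← smul_eq_mul, ← Real.sInf_smul_of_nonneg zero_le_two]
  congr 1
  ext x
  rw [Set.mem_smul_set_iff_inv_smul_mem₀ two_ne_zero]
  simp only [mem_setOf_eq, smul_eq_mul]
  have : {ω | 2 * Z ω ≤ x} = {ω | Z ω ≤ 2⁻¹ * x} := by
    ext ω
    simp only [mem_setOf_eq]
    constructor <;> intro h <;> linarith
  rw [this]

theorem aux_unbdd (μ : Measure Ω) [IsProbabilityMeasure μ]
    (Z : Ω → ℝ) (hZ : Integrable Z μ) (hu : ¬ ∃ c : ℝ, ∀ᵐ ω ∂μ, Z ω ≤ c) :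
    adjES μ (fun p => ES μ Z p) (fun ω => 2 * Z ω) = ⊤ := by
  have hm := hZ.aemeasurable
  rw [EReal.eq_top_iff_forall_lt]
  intro M0
  set M := M0 + 1 with hM
  have hlt : μ {ω | Z ω ≤ M} < 1 := by
    refine lt_of_le_of_ne prob_le_one fun h => hu ⟨M, ?_⟩
    rw [← prob_compl_eq_zero_iff₀ ] at h
    · exact h
    · exact hm.nullMeasurable measurableSet_Iic
  obtain ⟨p, hp1, hp2⟩ : ∃ p : ℝ, p ∈ Ioo (0:ℝ) 1 ∧ μ {ω | Z ω ≤ M} < ENNReal.ofReal p := by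
    obtain ⟨r, hr1, hr2⟩ := ENNReal.lt_iff_exists_nnreal_btwn.1 hlt
    refine ⟨r, ⟨?_, by exact_mod_cast hr2⟩, by simpa using hr1⟩
    have : (0:ENNReal) < r := bot_le.trans_lt hr1
    exact_mod_cast this
  have hp : p ≠ 1 := hp1.2.ne
  have hint : M * (1 - p) ≤ ∫ q in Ioo p 1, VaRr μ Z q := by
    have h1 : ∫ q in Ioo p 1, M = M * (1 - p) := by
      simp [hp1.2.le, mul_comm]
    rw [← h1]
    apply setIntegral_mono_on (by simp)
      ((VaRr_integrable μ Z hZ).mono_set (Ioo_subset_Ioo_left hp1.1.le)) measurableSet_Ioo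
    intro q hq
    by_contra h
    have := (VaRr_le_iff μ Z hm ⟨hp1.1.trans hq.1, hq.2⟩ M).1 (not_le.1 h).le
    exact absurd ((ENNReal.ofReal_le_ofReal hq.1.le).trans this) (not_le.2 hp2)
  have h3 : ES μ (fun ω => 2 * Z ω) p - ES μ Z p =
      (((1 - p)⁻¹ * ∫ q in Ioo p 1, VaRr μ Z q : ℝ) : EReal) := by
    simp only [ES, if_neg hp, VaRr_two]
    rw [integral_const_mul, ← EReal.coe_sub]
    congr 1
    ring
  have h4 : (M0 : EReal) < ES μ (fun ω => 2 * Z ω) p - ES μ Z p := by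
    rw [h3, EReal.coe_lt_coe_iff]
    have hpos : 0 < 1 - p := sub_pos.2 hp1.2
    rw [inv_mul_eq_div, lt_div_iff₀ hpos]
    nlinarith
  refine h4.trans_le ?_
  exact le_iSup₂ (f := fun p (_ : p ∈ Set.Icc (0:ℝ) 1) =>
    ES μ (fun ω => 2 * Z ω) p - ES μ Z p) p ⟨hp1.1.le, hp1.2.le⟩

theorem exists_unbdd (μ : Measure Ω) [IsProbabilityMeasure μ] (hat : Atomless μ) :
    ∃ X : Ω → ℝ, Integrable X μ ∧ ¬ ∃ c : ℝ, ∀ᵐ ω ∂μ, X ω ≤ c := by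
  have half : ∀ A : {A : Set Ω // MeasurableSet A ∧ 0 < μ A},
      ∃ B : {A : Set Ω // MeasurableSet A ∧ 0 < μ A}, B.1 ⊆ A.1 ∧ μ B.1 ≤ 2⁻¹ * μ A.1 := by
    rintro ⟨A, hA, hA0⟩
    obtain ⟨B, hB, hBA, hB0, hlt⟩ := hat A hA hA0
    have hsum : μ (A \ B) + μ B = μ A := by
      have := measure_diff_add_inter (μ := μ) A hB
      rwa [inter_eq_right.2 hBA] at this
    have hd0 : 0 < μ (A \ B) := by
      rw [pos_iff_ne_zero]
      intro h
      rw [h, zero_add] at hsum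
      exact hlt.ne hsum
    have hh : ∀ a b : ENNReal, a ≤ b → a ≤ 2⁻¹ * (a + b) := by
      intro a b hab
      calc a = 2⁻¹ * (a + a) := by
            rw [← two_mul, ← mul_assoc, ENNReal.inv_mul_cancel (by simp) (by simp), one_mul]
        _ ≤ _ := by gcongr
    rcases le_total (μ B) (μ (A \ B)) with h | h
    · refine ⟨⟨B, hB, hB0⟩, hBA, ?_⟩
      have := hh _ _ h
      rwa [add_comm, hsum] at this
    · refine ⟨⟨A \ B, hA.diff hB, hd0⟩, diff_subset, ?_⟩
      have := hh _ _ h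
      rwa [hsum] at this
  choose f hf1 hf2 using half
  let A : ℕ → {A : Set Ω // MeasurableSet A ∧ 0 < μ A} :=
    fun n => f^[n] ⟨univ, MeasurableSet.univ, by simp⟩
  have hsucc : ∀ n, A (n+1) = f (A n) := fun n => Function.iterate_succ_apply' _ _ _
  have hanti : Antitone (fun n => (A n).1) := antitone_nat_of_succ_le fun n => by
    rw [hsucc]; exact hf1 _
  have hmeas : ∀ n, μ (A n).1 ≤ 2⁻¹ ^ n := by
    intro n
    induction n with
    | zero => simpa using prob_le_one
    | succ n ih =>
      rw [hsucc, pow_succ']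
      exact (hf2 _).trans (by gcongr)
  let F : Ω → ENNReal := fun ω => ∑' n, (A n).1.indicator (fun _ => 1) ω
  have hFm : Measurable F :=
    Measurable.ennreal_tsum fun n => measurable_const.indicator (A n).2.1
  have hFi : ∫⁻ ω, F ω ∂μ ≠ ⊤ := by
    rw [lintegral_tsum fun n => (measurable_const.indicator (A n).2.1).aemeasurable]
    have : ∀ n, ∫⁻ ω, (A n).1.indicator (fun _ => 1) ω ∂μ = μ (A n).1 := fun n => by
      rw [lintegral_indicator (A n).2.1]; simp
    simp only [this]
    refine ne_top_of_le_ne_top ?_ (ENNReal.tsum_le_tsum hmeas)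
    rw [ENNReal.tsum_geometric]
    simp
  refine ⟨fun ω => (F ω).toReal, integrable_toReal_of_lintegral_ne_top hFm.aemeasurable hFi, ?_⟩
  rintro ⟨c, hc⟩
  obtain ⟨n, hn⟩ := exists_nat_gt c
  have hlt := ae_lt_top hFm hFi
  have hnot : ∀ᵐ ω ∂μ, ω ∉ (A n).1 := by
    filter_upwards [hc, hlt] with ω h1 h2 hmem
    have : (n : ENNReal) ≤ F ω := by
      calc (n : ENNReal) = ∑ i ∈ Finset.range n, (A i).1.indicator (fun _ => 1) ω := by
            rw [Finset.sum_congr rfl (g := fun _ => (1:ENNReal))]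
            · simp
            · intro i hi
              exact indicator_of_mem (hanti (Finset.mem_range.1 hi).le hmem) _
        _ ≤ F ω := ENNReal.sum_le_tsum _
    have := ENNReal.toReal_mono h2.ne this
    simp only [ENNReal.toReal_natCast] at this
    linarith
  have h0 := (A n).2.2
  rw [ae_iff] at hnot
  simp only [not_not] at hnot
  exact h0.ne' hnot

/-- For `Z ∈ L¹` and the risk profile `g(p) = ES_p(Z)`, the
adjusted Expected Shortfall `ES^g` is never finite on all of `L¹`: there is
`X ∈ L¹` with `ES^g(X) = ∞`.  Specifically, if `Z` is bounded from above then every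
`X ∈ L¹` unbounded from above has `ES^g(X) = ∞`; if `Z` is unbounded from above then
`X = 2Z` has `ES^g(X) = ∞`. -/
theorem stmt18 (μ : Measure Ω) [IsProbabilityMeasure μ] (hatomless : Atomless μ)
    (Z : Ω → ℝ) (hZ : Integrable Z μ) :
    (∃ X : Ω → ℝ, Integrable X μ ∧ adjES μ (fun p => ES μ Z p) X = ⊤) ∧
    ((∃ c : ℝ, ∀ᵐ ω ∂μ, Z ω ≤ c) → ∀ X : Ω → ℝ, Integrable X μ →
        (¬ ∃ c : ℝ, ∀ᵐ ω ∂μ, X ω ≤ c) → adjES μ (fun p => ES μ Z p) X = ⊤) ∧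
    ((¬ ∃ c : ℝ, ∀ᵐ ω ∂μ, Z ω ≤ c) →
        adjES μ (fun p => ES μ Z p) (fun ω => 2 * Z ω) = ⊤) := by
  refine ⟨?_, fun h X _ hX => aux_bdd μ Z h X hX, fun h => aux_unbdd μ Z hZ h⟩
  by_cases h : ∃ c : ℝ, ∀ᵐ ω ∂μ, Z ω ≤ c
  · obtain ⟨X, hX, hX2⟩ := exists_unbdd μ hatomless
    exact ⟨X, hX, aux_bdd μ Z h X hX2⟩
  · exact ⟨_, hZ.const_mul 2, aux_unbdd μ Z hZ h⟩
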